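/- Let Γ be a regular nicely distance-balanced graph with valency k, diameter d ≥ 3 and γ(Γ) = d+1. Then: (i) if k = 3 then d ∈ {3,4,5}; (ii) if k = 4 then d ∈ {3,4}; (iii) if k = 5 then d = 3. -/

import Mathlib

open SimpleGraph Finset

/-- `W_{u,v}`: the set of vertices strictly closer to `u` than to `v`. -/
noncomputable def ndbW {V : Type*} [Fintype V] (G : SimpleGraph V) (u v : V) : Finset V :=
  Finset.univ.filter fun x => G.dist x u < G.dist x v

/-- `D^i_j(u,v)`: the set of vertices at distance `i` from `u` and `j` from `v`. -/
noncomputable def ndbD {V : Type*} [Fintype V] (G : SimpleGraph V) (u v : V) (i j : ℕ) : Finset V :=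
  Finset.univ.filter fun x => G.dist x u = i ∧ G.dist x v = j

/-- `G` is nicely distance-balanced with constant `γ`. -/
def IsNDB {V : Type*} [Fintype V] (G : SimpleGraph V) (γ : ℕ) : Prop :=
  ∀ u v : V, G.Adj u v → (ndbW G u v).card = γ ∧ (ndbW G v u).card = γ

/-- `G` has diameter `d`. -/
def HasDiam {V : Type*} [Fintype V] (G : SimpleGraph V) (d : ℕ) : Prop :=
  (∀ u v : V, G.dist u v ≤ d) ∧ ∃ u v : V, G.dist u v = d

/-!
Let `x 0, ..., x d` be a geodesic. The set `W_{x 1, x 0}` has `d + 1` elements and contains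
`x 1, ..., x d`, so exactly one vertex `u` off the path is closer to `x 1` than to `x 0`. Reversing
the path gives a vertex `w` that plays the same role at the other end. A neighbour `v ∉ {u, w}` of
`x j` off the path then has distance exactly `j` from `x 0`, and for `2 ≤ j < d` it lies in
`W_{x 2, x 1}`, which has only two elements off the path.

Each of `x 2, ..., x (d - 1)` has at least `k - 2` neighbours off the path, and only `u` can be a
neighbour of two of them. Since `u` itself lies in `W_{x 2, x 1}` unless it is adjacent to `x 1`,
counting gives `(k - 2) * (d - 2) ≤ n + ε + 1`, where `n` is the number of neighbours of `u` among
`x 1, ..., x (d - 1)`, and `ε` is `0` if `u = w` and `1` otherwise. Finally `n + ε ≤ 3`, and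
equality makes `u` adjacent to three consecutive vertices `x j, x (j + 1), x (j + 2)`. In a cubic
graph this is impossible: every neighbour of `x (j + 1)` other than `u` would be a neighbour of `u`,
so that `W_{x (j + 1), u}` would be a singleton.
-/

section Distance

variable {V : Type*} {G : SimpleGraph V} {u v w : V}

theorem dist_le_dist_add_one_of_adj (huv : G.Adj u v) (w : V) :
    G.dist u w ≤ G.dist v w + 1 := by
  have := huv.diff_dist_adj (u := w)
  rw [dist_comm (u := w), dist_comm (u := w)] at this
  omega

theorem exists_adj_dist_add_one_eq (h : G.dist u v ≠ 0) :
    ∃ z, G.Adj u z ∧ G.dist z v + 1 = G.dist u v := by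
  obtain ⟨p, hp⟩ := exists_walk_of_dist_ne_zero h
  have hadj : G.Adj (p.getVert 0) (p.getVert 1) := p.adj_getVert_succ (by omega)
  have htail := length_eq_dist_of_subwalk hp (p.isSubwalk_drop 1)
  rw [Walk.drop_length] at htail
  exact ⟨p.getVert 1, by rwa [p.getVert_zero] at hadj, by omega⟩

theorem ndbW_subset_singleton_of_forall_adj [Fintype V] (hconn : G.Connected)
    (h : ∀ z, G.Adj u z → z = v ∨ G.Adj v z) : ndbW G u v ⊆ {u} := by
  intro t ht
  simp only [ndbW, mem_filter, mem_univ, true_and] at ht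
  rw [mem_singleton]
  by_contra htu
  rw [dist_comm, dist_comm (v := v)] at ht
  obtain ⟨z, huz, hz⟩ := exists_adj_dist_add_one_eq (hconn.pos_dist_of_ne (Ne.symm htu)).ne'
  rcases h z huz with rfl | hvz
  · omega
  · have := dist_le_dist_add_one_of_adj hvz t
    omega

end Distance

theorem eq_or_eq_or_eq_of_adj_of_degree_le_three {V : Type*} {G : SimpleGraph V} {p a b c z : V}
    [Fintype (G.neighborSet p)] (hp : G.degree p ≤ 3) (ha : G.Adj p a) (hb : G.Adj p b)
    (hc : G.Adj p c) (hab : a ≠ b) (hac : a ≠ c) (hbc : b ≠ c) (hz : G.Adj p z) :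
    z = a ∨ z = b ∨ z = c := by
  classical
  have hsub : {a, b, c} ⊆ G.neighborFinset p := by
    simp [insert_subset_iff, ha, hb, hc]
  have hcard : #(G.neighborFinset p) ≤ #{a, b, c} := by
    rwa [card_neighborFinset_eq_degree, card_eq_three.2 ⟨a, b, c, hab, hac, hbc, rfl⟩]
  have hmem := (mem_neighborFinset G p z).2 hz
  rw [← eq_of_subset_of_card_le hsub hcard] at hmem
  simpa using hmem

/-- The vertices `x 0, ..., x d` form a shortest path of `G`. With truncated subtraction,
`(i - j) + (j - i)` is `|i - j|`. -/
def IsGeodesic {V : Type*} (G : SimpleGraph V) (d : ℕ) (x : ℕ → V) : Prop :=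
  ∀ i ≤ d, ∀ j ≤ d, G.dist (x i) (x j) = (i - j) + (j - i)

theorem exists_isGeodesic {V : Type*} {G : SimpleGraph V} {v w : V} (h : G.Reachable v w) :
    ∃ x, IsGeodesic G (G.dist v w) x := by
  obtain ⟨p, hp⟩ := h.exists_walk_length_eq_dist
  have dist_getVert : ∀ i j, i ≤ j → j ≤ G.dist v w →
      G.dist (p.getVert i) (p.getVert j) = j - i := by
    intro i j hij hj
    have hsub := length_eq_dist_of_subwalk hp
      (((p.drop i).isSubwalk_take (j - i)).trans (p.isSubwalk_drop i))
    rw [Walk.take_length, Walk.drop_length, Walk.drop_getVert, Nat.add_sub_cancel' hij] at hsub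
    omega
  refine ⟨p.getVert, fun i hi j hj => ?_⟩
  rcases le_total i j with hij | hji
  · rw [dist_getVert i j hij hj]
    omega
  · rw [dist_comm, dist_getVert j i hji hi]
    omega

namespace IsGeodesic

variable {V : Type*} {G : SimpleGraph V} {d i j : ℕ} {x : ℕ → V} {v : V}

theorem reverse (hx : IsGeodesic G d x) : IsGeodesic G d (fun i => x (d - i)) := by
  intro i hi j hj
  rw [hx _ (by omega) _ (by omega)]
  omega

theorem injOn (hx : IsGeodesic G d x) : Set.InjOn x (Set.Iic d) := by
  intro i hi j hj hij
  have := hx i hi j hj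
  rw [hij, dist_self] at this
  omega

theorem adj_succ (hx : IsGeodesic G d x) (hi : i < d) : G.Adj (x i) (x (i + 1)) := by
  rw [← dist_eq_one_iff_adj, hx _ (by omega) _ (by omega)]
  omega

theorem dist_le_of_adj (hx : IsGeodesic G d x) (hj : j ≤ d) (hvj : G.Adj v (x j)) (hi : i ≤ d) :
    G.dist v (x i) ≤ (i - j) + (j - i) + 1 := by
  have := dist_le_dist_add_one_of_adj hvj (x i)
  rw [hx j hj i hi] at this
  omega

theorem le_dist_add_one_of_adj (hx : IsGeodesic G d x) (hj : j ≤ d) (hvj : G.Adj v (x j))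
    (hi : i ≤ d) : (i - j) + (j - i) ≤ G.dist v (x i) + 1 := by
  have := dist_le_dist_add_one_of_adj hvj.symm (x i)
  rw [hx j hj i hi] at this
  omega

theorem ne_of_adj (hx : IsGeodesic G d x) (hj : j ≤ d) (hvj : G.Adj v (x j))
    (hpred : v ≠ x (j - 1)) (hsucc : v ≠ x (j + 1)) : ∀ i ≤ d, v ≠ x i := by
  rintro i hi rfl
  have hdist := dist_eq_one_iff_adj.2 hvj
  rw [hx i hi j hj] at hdist
  obtain rfl | rfl : i = j - 1 ∨ i = j + 1 := by omega
  · exact hpred rfl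
  · exact hsucc rfl

theorem le_dist_add_dist (hx : IsGeodesic G d x) (hconn : G.Connected) (v : V) :
    d ≤ G.dist v (x 0) + G.dist v (x d) := by
  have := hconn.dist_triangle (u := x 0) (v := v) (w := x d)
  rw [hx 0 (Nat.zero_le d) d le_rfl, dist_comm (v := v)] at this
  omega

theorem dist_eq_of_adj (hx : IsGeodesic G d x) (hconn : G.Connected) (hj : 1 ≤ j) (hjd : j < d)
    (hvj : G.Adj v (x j)) (h0 : G.dist v (x 0) ≤ G.dist v (x 1))
    (hd : G.dist v (x d) ≤ G.dist v (x (d - 1))) :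
    G.dist v (x 0) = j ∧ G.dist v (x 1) = j := by
  have hsum := hx.le_dist_add_dist hconn v
  have hle1 := hx.dist_le_of_adj hjd.le hvj (i := 1) (by omega)
  have hled := hx.dist_le_of_adj hjd.le hvj (i := d - 1) (by omega)
  omega

end IsGeodesic

/-- The part of `W_{x (i + 1), x i}` off the path `x 0, ..., x d`. The vertices called `u` and `w`
are the elements of this set for `i = 0` along the path and along the reversed path. -/
noncomputable def offPathW {V : Type*} [Fintype V] (G : SimpleGraph V) (d : ℕ) (x : ℕ → V)
    (i : ℕ) : Finset V :=
  open scoped Classical in {v ∈ ndbW G (x (i + 1)) (x i) | ∀ j ≤ d, v ≠ x j}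

/-- The neighbours of `x j` off the path `x 0, ..., x d`. -/
noncomputable def offPathNeighbors {V : Type*} [Fintype V] (G : SimpleGraph V) (d : ℕ)
    (x : ℕ → V) (j : ℕ) : Finset V :=
  open scoped Classical in {v | G.Adj v (x j) ∧ ∀ i ≤ d, v ≠ x i}

section OffPath

variable {V : Type*} [Fintype V] {G : SimpleGraph V} {d i j j' γ : ℕ} {x : ℕ → V} {u v w : V}

theorem mem_offPathW : v ∈ offPathW G d x i ↔
    G.dist v (x (i + 1)) < G.dist v (x i) ∧ ∀ j ≤ d, v ≠ x j := by
  simp [offPathW, ndbW]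

theorem mem_offPathNeighbors :
    v ∈ offPathNeighbors G d x j ↔ G.Adj v (x j) ∧ ∀ i ≤ d, v ≠ x i := by
  simp [offPathNeighbors]

theorem IsGeodesic.card_offPathW_add (hx : IsGeodesic G d x) (hndb : IsNDB G γ) (hi : i < d) :
    #(offPathW G d x i) + (d - i) = γ := by
  classical
  have hinj : Set.InjOn x (Icc (i + 1) d : Finset ℕ) :=
    hx.injOn.mono fun j hj => (Finset.mem_Icc.1 hj).2
  have hpath : (Icc (i + 1) d).image x ⊆ ndbW G (x (i + 1)) (x i) := by
    simp only [image_subset_iff, mem_Icc, ndbW, mem_filter, mem_univ, true_and]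
    rintro j ⟨hij, hjd⟩
    rw [hx _ hjd _ (by omega), hx _ hjd _ (by omega)]
    omega
  have hsdiff : offPathW G d x i = ndbW G (x (i + 1)) (x i) \ (Icc (i + 1) d).image x := by
    ext v
    simp only [mem_offPathW, ndbW, mem_sdiff, mem_filter, mem_univ, true_and, mem_image, mem_Icc]
    refine and_congr_right fun hv => ⟨?_, fun hoff j hjd hvj => ?_⟩
    · rintro hoff ⟨j, hj, rfl⟩
      exact hoff j hj.2 rfl
    · subst hvj
      rw [hx _ hjd _ (by omega), hx _ hjd _ (by omega)] at hv
      exact hoff ⟨j, by omega, rfl⟩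
  have hcard := card_sdiff_add_card_eq_card hpath
  rw [← hsdiff, card_image_of_injOn hinj, Nat.card_Icc, (hndb _ _ (hx.adj_succ hi).symm).1]
    at hcard
  omega

theorem IsGeodesic.exists_offPathW_zero_eq_singleton (hx : IsGeodesic G d x)
    (hndb : IsNDB G (d + 1)) (hd : 0 < d) : ∃ u, offPathW G d x 0 = {u} := by
  have := hx.card_offPathW_add hndb hd
  exact card_eq_one.1 (by omega)

theorem dist_lt_of_offPathW_eq (hu : offPathW G d x 0 = {u}) :
    G.dist u (x 1) < G.dist u (x 0) :=
  (mem_offPathW.1 (hu ▸ mem_singleton_self u)).1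

theorem ne_of_offPathW_eq (hu : offPathW G d x 0 = {u}) : ∀ i ≤ d, u ≠ x i :=
  (mem_offPathW.1 (hu ▸ mem_singleton_self u)).2

theorem dist_le_of_offPathW_eq (hu : offPathW G d x 0 = {u}) (hvu : v ≠ u)
    (hv : ∀ i ≤ d, v ≠ x i) : G.dist v (x 0) ≤ G.dist v (x 1) := by
  by_contra! hlt
  exact hvu (mem_singleton.1 (hu ▸ mem_offPathW.2 ⟨hlt, hv⟩))

theorem dist_le_of_offPathW_reverse_eq (hw : offPathW G d (fun i => x (d - i)) 0 = {w})
    (hvw : v ≠ w) (hv : ∀ i ≤ d, v ≠ x i) : G.dist v (x d) ≤ G.dist v (x (d - 1)) :=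
  dist_le_of_offPathW_eq hw hvw fun i _ => hv (d - i) (Nat.sub_le d i)

theorem exists_eq_of_offPathW_eq (hu : offPathW G d x 0 = {u}) (hvu : v ≠ u)
    (hlt : G.dist v (x 1) < G.dist v (x 0)) : ∃ i ≤ d, v = x i := by
  by_contra! hv
  exact hvu (mem_singleton.1 (hu ▸ mem_offPathW.2 ⟨hlt, hv⟩))

theorem IsGeodesic.exists_adj_of_offPathW_eq (hx : IsGeodesic G d x) (hconn : G.Connected)
    (hd : 0 < d) (hu : offPathW G d x 0 = {u}) :
    ∃ j, 1 ≤ j ∧ j ≤ d ∧ G.dist u (x 0) = j + 1 ∧ G.dist u (x 1) = j ∧ G.Adj u (x j) := by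
  have hlt := dist_lt_of_offPathW_eq hu
  have hpos := hconn.pos_dist_of_ne (ne_of_offPathW_eq hu 1 hd)
  have hle := dist_le_dist_add_one_of_adj (hx.adj_succ hd) u
  rw [dist_comm, dist_comm (v := u)] at hle
  obtain ⟨z, huz, hz⟩ := exists_adj_dist_add_one_eq hpos.ne'
  have hz0 := dist_le_dist_add_one_of_adj huz (x 0)
  obtain ⟨j, hjd, rfl⟩ := exists_eq_of_offPathW_eq hu huz.ne' (by omega)
  rw [hx j hjd 0 (by omega), hx j hjd 1 hd] at *
  exact ⟨j, by omega, hjd, by omega, by omega, huz⟩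

theorem IsGeodesic.dist_eq_add_one_of_adj (hx : IsGeodesic G d x) (hconn : G.Connected)
    (hu : offPathW G d x 0 = {u}) (hud : G.dist u (x d) ≤ G.dist u (x (d - 1)))
    (hjd : j + 2 ≤ d) (huj : G.Adj u (x j)) : G.dist u (x 0) = j + 1 := by
  have hlt := dist_lt_of_offPathW_eq hu
  have hsum := hx.le_dist_add_dist hconn u
  have hle0 := hx.dist_le_of_adj (by omega) huj (i := 0) (by omega)
  have hled := hx.dist_le_of_adj (by omega) huj (i := d - 1) (by omega)
  by_contra hne
  -- The next vertex on a geodesic from `u` to `x d` is again closer to `x 1` than to `x 0`, hence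
  -- it is `x (j + 1)`, and `u` is closer to `x (d - 1)` than to `x d`.
  have hu0 : G.dist u (x 0) = j := by omega
  have hu_end : G.dist u (x d) = d - j := by omega
  have hne0 : G.dist u (x d) ≠ 0 := by omega
  obtain ⟨z, huz, hz⟩ := exists_adj_dist_add_one_eq hne0
  have hz_sum := hx.le_dist_add_dist hconn z
  have hz1 := dist_le_dist_add_one_of_adj huz.symm (x 1)
  obtain ⟨i, hid, rfl⟩ := exists_eq_of_offPathW_eq hu huz.ne' (by omega)
  rw [hx i hid d le_rfl] at hz
  have := hx.dist_le_of_adj hid huz (i := d - 1) (by omega)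
  omega

theorem IsGeodesic.index_eq_of_adj (hx : IsGeodesic G d x) (hconn : G.Connected)
    (hu : offPathW G d x 0 = {u}) (hw : offPathW G d (fun i => x (d - i)) 0 = {w})
    (hvu : v ≠ u) (hv : ∀ i ≤ d, v ≠ x i) (hj : 2 ≤ j) (hjd : j < d) (hvj : G.Adj v (x j))
    (hj' : 2 ≤ j') (hjd' : j' < d) (hvj' : G.Adj v (x j')) : j = j' := by
  have h0 := dist_le_of_offPathW_eq hu hvu hv
  by_cases hvw : v = w
  · subst hvw
    have dist_end : ∀ i, 2 ≤ i → i < d → G.Adj v (x i) → G.dist v (x d) = d - i + 1 := by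
      intro i hi hid hvi
      refine hx.reverse.dist_eq_add_one_of_adj hconn hw ?_ (by omega) ?_
      · simpa only [Nat.sub_self, Nat.sub_sub_self (show 1 ≤ d by omega)] using h0
      · rwa [Nat.sub_sub_self hid.le]
    have := dist_end j hj hjd hvj
    have := dist_end j' hj' hjd' hvj'
    omega
  · have hd := dist_le_of_offPathW_reverse_eq hw hvw hv
    have := hx.dist_eq_of_adj hconn (by omega) hjd hvj h0 hd
    have := hx.dist_eq_of_adj hconn (by omega) hjd' hvj' h0 hd
    omega

theorem IsGeodesic.mem_offPathW_one (hx : IsGeodesic G d x) (hconn : G.Connected)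
    (hu : offPathW G d x 0 = {u}) (hw : offPathW G d (fun i => x (d - i)) 0 = {w})
    (hvu : v ≠ u) (hvw : v ≠ w) (hj : 2 ≤ j) (hjd : j < d)
    (hvj : v ∈ offPathNeighbors G d x j) : v ∈ offPathW G d x 1 := by
  obtain ⟨hadj, hv⟩ := mem_offPathNeighbors.1 hvj
  have := hx.dist_eq_of_adj hconn (by omega) hjd hadj (dist_le_of_offPathW_eq hu hvu hv)
    (dist_le_of_offPathW_reverse_eq hw hvw hv)
  have hle2 : G.dist v (x 2) ≤ j - 2 + 1 := by
    simpa [Nat.sub_eq_zero_of_le hj] using hx.dist_le_of_adj hjd.le hadj (i := 2) (by omega)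
  refine mem_offPathW.2 ⟨?_, hv⟩
  rw [one_add_one_eq_two]
  omega

theorem IsGeodesic.degree_sub_two_le_card_offPathNeighbors [DecidableRel G.Adj]
    (hx : IsGeodesic G d x) (hj : j ≤ d) :
    G.degree (x j) - 2 ≤ #(offPathNeighbors G d x j) := by
  classical
  have hsub : G.neighborFinset (x j) \ {x (j - 1), x (j + 1)} ⊆ offPathNeighbors G d x j := by
    intro v hv
    simp only [mem_sdiff, mem_neighborFinset, mem_insert, mem_singleton, not_or] at hv
    obtain ⟨hadj, hpred, hsucc⟩ := hv
    exact mem_offPathNeighbors.2 ⟨hadj.symm, hx.ne_of_adj hj hadj.symm hpred hsucc⟩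
  calc G.degree (x j) - 2 ≤ #(G.neighborFinset (x j)) - #{x (j - 1), x (j + 1)} := by
        rw [card_neighborFinset_eq_degree]
        exact Nat.sub_le_sub_left card_le_two _
    _ ≤ #(G.neighborFinset (x j) \ {x (j - 1), x (j + 1)}) := le_card_sdiff _ _
    _ ≤ #(offPathNeighbors G d x j) := card_le_card hsub

theorem IsGeodesic.sum_card_offPathNeighbors_erase_le [DecidableEq V] (hx : IsGeodesic G d x)
    (hconn : G.Connected) (hu : offPathW G d x 0 = {u})
    (hw : offPathW G d (fun i => x (d - i)) 0 = {w}) :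
    ∑ j ∈ Icc 2 (d - 1), #((offPathNeighbors G d x j).erase u) ≤
      #((offPathW G d x 1).erase u) + if u = w then 0 else 1 := by
  have hdisj : (Icc 2 (d - 1) : Set ℕ).PairwiseDisjoint
      fun j => (offPathNeighbors G d x j).erase u := by
    intro j hj j' hj' hne
    rw [coe_Icc, Set.mem_Icc] at hj hj'
    refine disjoint_left.2 fun v hv hv' => hne ?_
    simp only [mem_erase, mem_offPathNeighbors] at hv hv'
    exact hx.index_eq_of_adj hconn hu hw hv.1 hv.2.2 hj.1 (by omega) hv.2.1 hj'.1 (by omega)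
      hv'.2.1
  rw [← card_biUnion hdisj]
  have hsub : (Icc 2 (d - 1)).biUnion (fun j => (offPathNeighbors G d x j).erase u) ⊆
      (insert w (offPathW G d x 1)).erase u := by
    simp only [biUnion_subset, mem_Icc]
    intro j hj v hv
    obtain ⟨hvu, hvj⟩ := mem_erase.1 hv
    refine mem_erase.2 ⟨hvu, mem_insert.2 (or_iff_not_imp_left.2 fun hvw => ?_)⟩
    exact hx.mem_offPathW_one hconn hu hw hvu hvw hj.1 (by omega) hvj
  refine (card_le_card hsub).trans ?_
  split_ifs with huw
  · rw [← huw, erase_insert_eq_erase, Nat.add_zero]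
  · rw [erase_insert_of_ne (Ne.symm huw)]
    exact card_insert_le _ _

end OffPath

/-- The indices of the neighbours of `v` among the inner vertices `x 1, ..., x (d - 1)` of the
path `x 0, ..., x d`. -/
noncomputable def innerNeighborIndices {V : Type*} (G : SimpleGraph V) (d : ℕ) (x : ℕ → V)
    (v : V) : Finset ℕ :=
  open scoped Classical in {j ∈ Icc 1 (d - 1) | G.Adj v (x j)}

section InnerNeighbors

variable {V : Type*} {G : SimpleGraph V} {d j : ℕ} {x : ℕ → V} {u v : V}

theorem mem_innerNeighborIndices :
    j ∈ innerNeighborIndices G d x v ↔ (1 ≤ j ∧ j ≤ d - 1) ∧ G.Adj v (x j) := by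
  simp [innerNeighborIndices]

theorem IsGeodesic.innerNeighborIndices_subset (hx : IsGeodesic G d x)
    (h0 : G.dist u (x 0) = j + 1) (huj : G.Adj u (x j)) (hjd : j ≤ d) :
    innerNeighborIndices G d x u ⊆ {j, j + 1, j + 2} := by
  intro i hi
  obtain ⟨hid, hui⟩ := mem_innerNeighborIndices.1 hi
  have hle0 := hx.dist_le_of_adj (by omega) hui (i := 0) (by omega)
  have hlei := hx.le_dist_add_one_of_adj hjd huj (i := i) (by omega)
  rw [dist_eq_one_iff_adj.2 hui] at hlei
  simp only [mem_insert, mem_singleton]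
  omega

end InnerNeighbors

section Counting

variable {V : Type*} [Fintype V] {G : SimpleGraph V} {d j k : ℕ} {x : ℕ → V} {u v w : V}

theorem IsGeodesic.card_offPathW_one_erase_add_le [DecidableEq V] [DecidableRel G.Adj]
    (hx : IsGeodesic G d x) (hconn : G.Connected) (hndb : IsNDB G (d + 1)) (hd : 2 ≤ d)
    (hu : offPathW G d x 0 = {u}) :
    #((offPathW G d x 1).erase u) + #{j ∈ Icc 2 (d - 1) | G.Adj u (x j)} ≤
      #(innerNeighborIndices G d x u) + 1 := by
  have hcard := hx.card_offPathW_add hndb (i := 1) (by omega)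
  have hsub : {j ∈ Icc 2 (d - 1) | G.Adj u (x j)} ⊆ innerNeighborIndices G d x u := by
    intro j hj
    rw [mem_filter, mem_Icc] at hj
    exact mem_innerNeighborIndices.2 ⟨by omega, hj.2⟩
  obtain ⟨j, hj, hjd, -, hu1, huj⟩ := hx.exists_adj_of_offPathW_eq hconn (by omega) hu
  obtain rfl | hj2 : j = 1 ∨ 2 ≤ j := by omega
  · have hlt : #{j ∈ Icc 2 (d - 1) | G.Adj u (x j)} < #(innerNeighborIndices G d x u) := by
      refine card_lt_card ((ssubset_iff_of_subset hsub).2 ⟨1, ?_, by simp⟩)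
      exact mem_innerNeighborIndices.2 ⟨by omega, huj⟩
    have := card_erase_le (s := offPathW G d x 1) (a := u)
    omega
  · have hmem : u ∈ offPathW G d x 1 := by
      have hle2 : G.dist u (x 2) ≤ j - 2 + 1 := by
        simpa [Nat.sub_eq_zero_of_le hj2] using hx.dist_le_of_adj hjd huj (i := 2) hd
      refine mem_offPathW.2 ⟨?_, ne_of_offPathW_eq hu⟩
      rw [one_add_one_eq_two]
      omega
    have := card_erase_add_one hmem
    have := card_le_card hsub
    omega

theorem IsGeodesic.sub_two_mul_sub_two_le [DecidableEq V] [DecidableRel G.Adj]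
    (hx : IsGeodesic G d x) (hconn : G.Connected) (hreg : G.IsRegularOfDegree k)
    (hndb : IsNDB G (d + 1)) (hd : 2 ≤ d) (hu : offPathW G d x 0 = {u})
    (hw : offPathW G d (fun i => x (d - i)) 0 = {w}) :
    (k - 2) * (d - 2) ≤ #(innerNeighborIndices G d x u) + (if u = w then 0 else 1) + 1 := by
  have hterm : ∀ j ∈ Icc 2 (d - 1), k - 2 ≤
      #((offPathNeighbors G d x j).erase u) + if G.Adj u (x j) then 1 else 0 := by
    intro j hj
    have hjd : j ≤ d := by
      rw [mem_Icc] at hj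
      omega
    rw [← hreg (x j)]
    refine (hx.degree_sub_two_le_card_offPathNeighbors hjd).trans ?_
    split_ifs with huj
    · have := pred_card_le_card_erase (s := offPathNeighbors G d x j) (a := u)
      omega
    · rw [erase_eq_of_notMem fun hmem => huj (mem_offPathNeighbors.1 hmem).1, Nat.add_zero]
  have hsum := sum_le_sum hterm
  rw [sum_const, Nat.card_Icc, smul_eq_mul, sum_add_distrib, ← card_filter,
    show d - 1 + 1 - 2 = d - 2 by omega, mul_comm] at hsum
  have := hx.sum_card_offPathNeighbors_erase_le hconn hu hw
  have := hx.card_offPathW_one_erase_add_le hconn hndb hd hu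
  omega

theorem IsGeodesic.innerNeighborIndices_subset_of_dist_le (hx : IsGeodesic G d x)
    (hconn : G.Connected) (hu : offPathW G d x 0 = {u})
    (hud : G.dist u (x d) ≤ G.dist u (x (d - 1))) (h0 : G.dist u (x 0) = j + 1) :
    innerNeighborIndices G d x u ⊆ {j, d - 1} := by
  intro i hi
  obtain ⟨hid, hui⟩ := mem_innerNeighborIndices.1 hi
  rw [mem_insert, mem_singleton]
  by_cases hi2 : i + 2 ≤ d
  · have := hx.dist_eq_add_one_of_adj hconn hu hud hi2 hui
    omega
  · omega

theorem IsGeodesic.card_innerNeighborIndices_add_le [DecidableEq V] (hx : IsGeodesic G d x)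
    (hconn : G.Connected) (hd : 0 < d) (hu : offPathW G d x 0 = {u})
    (hw : offPathW G d (fun i => x (d - i)) 0 = {w}) :
    #(innerNeighborIndices G d x u) + (if u = w then 0 else 1) ≤ 3 := by
  obtain ⟨j, -, hjd, h0, -, huj⟩ := hx.exists_adj_of_offPathW_eq hconn hd hu
  split_ifs with huw
  · exact (card_le_card (hx.innerNeighborIndices_subset h0 huj hjd)).trans card_le_three
  · have hud := dist_le_of_offPathW_reverse_eq hw huw (ne_of_offPathW_eq hu)
    have hsub := hx.innerNeighborIndices_subset_of_dist_le hconn hu hud h0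
    exact Nat.add_le_add_right ((card_le_card hsub).trans card_le_two) 1

theorem IsGeodesic.exists_adj_three_consecutive [DecidableEq V] (hx : IsGeodesic G d x)
    (hconn : G.Connected) (hd : 0 < d) (hu : offPathW G d x 0 = {u})
    (hw : offPathW G d (fun i => x (d - i)) 0 = {w})
    (hcard : 3 ≤ #(innerNeighborIndices G d x u) + (if u = w then 0 else 1)) :
    ∃ j, j + 2 ≤ d ∧ G.Adj u (x j) ∧ G.Adj u (x (j + 1)) ∧ G.Adj u (x (j + 2)) := by
  obtain ⟨j, -, hjd, h0, -, huj⟩ := hx.exists_adj_of_offPathW_eq hconn hd hu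
  split_ifs at hcard with huw
  · have hind := eq_of_subset_of_card_le (hx.innerNeighborIndices_subset h0 huj hjd)
      (card_le_three.trans hcard)
    have hinner : ∀ i ∈ ({j, j + 1, j + 2} : Finset ℕ), i ≤ d - 1 ∧ G.Adj u (x i) :=
      fun i hi => (mem_innerNeighborIndices.1 (hind ▸ hi)).imp_left And.right
    have hlast := hinner (j + 2) (by simp)
    exact ⟨j, by omega, huj, (hinner (j + 1) (by simp)).2, hlast.2⟩
  · have hne := ne_of_offPathW_eq hu
    have hud := dist_le_of_offPathW_reverse_eq hw huw hne
    have hind := eq_of_subset_of_card_le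
      (hx.innerNeighborIndices_subset_of_dist_le hconn hu hud h0)
      (card_le_two.trans (Nat.le_of_succ_le_succ hcard))
    have hj : j ≠ d - 1 := by
      rintro rfl
      rw [hind, pair_eq_singleton, card_singleton] at hcard
      omega
    have hj_inner : j ∈ innerNeighborIndices G d x u := by simp [hind]
    have hd_inner : d - 1 ∈ innerNeighborIndices G d x u := by simp [hind]
    have hu_pred := (mem_innerNeighborIndices.1 hd_inner).2
    have hu_end : G.Adj u (x d) := by
      have := hconn.pos_dist_of_ne (hne d le_rfl)
      rw [dist_eq_one_iff_adj.2 hu_pred] at hud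
      exact dist_eq_one_iff_adj.1 (by omega)
    have hle0 := hx.le_dist_add_one_of_adj le_rfl hu_end (i := 0) (by omega)
    have hj_le := (mem_innerNeighborIndices.1 hj_inner).1.2
    obtain rfl : d = j + 2 := by omega
    exact ⟨j, le_rfl, huj, hu_pred, hu_end⟩

theorem IsGeodesic.not_adj_three_consecutive [DecidableRel G.Adj] {γ : ℕ}
    (hx : IsGeodesic G d x) (hconn : G.Connected) (hdeg : G.degree (x (j + 1)) ≤ 3)
    (hndb : IsNDB G γ) (hγ : 2 ≤ γ) (hv : ∀ i ≤ d, v ≠ x i) (hjd : j + 2 ≤ d)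
    (h0 : G.Adj v (x j)) (h1 : G.Adj v (x (j + 1))) : ¬ G.Adj v (x (j + 2)) := by
  intro h2
  have hends : x j ≠ x (j + 2) := fun h => by
    have := hx.injOn (Set.mem_Iic.2 (by omega)) (Set.mem_Iic.2 hjd) h
    omega
  have hnbr : ∀ z, G.Adj (x (j + 1)) z → z = v ∨ G.Adj v z := by
    intro z hz
    obtain rfl | rfl | rfl := eq_or_eq_or_eq_of_adj_of_degree_le_three hdeg
      (hx.adj_succ (by omega)).symm (hx.adj_succ (by omega)) h1.symm hends
      (hv j (by omega)).symm (hv (j + 2) hjd).symm hz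
    · exact Or.inr h0
    · exact Or.inr h2
    · exact Or.inl rfl
  have hcard := card_le_card (ndbW_subset_singleton_of_forall_adj hconn hnbr)
  rw [(hndb _ _ h1.symm).1, card_singleton] at hcard
  omega

end Counting

theorem stmt_5_general {V : Type*} [Fintype V] (G : SimpleGraph V) [DecidableRel G.Adj]
    (hconn : G.Connected) (k d : ℕ) (hreg : G.IsRegularOfDegree k)
    (hd : 3 ≤ d) (hdist : ∃ v w, G.dist v w = d) (hndb : IsNDB G (d + 1)) :
    (k - 2) * (d - 2) ≤ 4 ∧ (k = 3 → d ≤ 5) := by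
  classical
  obtain ⟨v, w, rfl⟩ := hdist
  obtain ⟨x, hx⟩ := exists_isGeodesic (hconn v w)
  obtain ⟨u, hu⟩ := hx.exists_offPathW_zero_eq_singleton hndb (by omega)
  obtain ⟨u', hu'⟩ := hx.reverse.exists_offPathW_zero_eq_singleton hndb (by omega)
  have hmul := hx.sub_two_mul_sub_two_le hconn hreg hndb (by omega) hu hu'
  have hindices := hx.card_innerNeighborIndices_add_le hconn (by omega) hu hu'
  refine ⟨by omega, ?_⟩
  rintro rfl
  by_contra! hlt
  obtain ⟨j, hjd, h0, h1, h2⟩ :=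
    hx.exists_adj_three_consecutive hconn (by omega) hu hu' (by omega)
  exact hx.not_adj_three_consecutive hconn (hreg _).le hndb (by omega) (ne_of_offPathW_eq hu) hjd
    h0 h1 h2

/-- For a regular NDB graph with valency `k`, diameter `d ≥ 3` and
`γ = d + 1`: if `k = 3` then `d ∈ {3,4,5}`; if `k = 4` then `d ∈ {3,4}`;
if `k = 5` then `d = 3`. -/
theorem stmt_5 {V : Type*} [Fintype V] (G : SimpleGraph V) [DecidableRel G.Adj]
    (hconn : G.Connected) (k d : ℕ) (hreg : G.IsRegularOfDegree k)
    (hd : 3 ≤ d) (hdiam : HasDiam G d) (hndb : IsNDB G (d + 1)) :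
    (k = 3 → d = 3 ∨ d = 4 ∨ d = 5) ∧
    (k = 4 → d = 3 ∨ d = 4) ∧
    (k = 5 → d = 3) := by
  obtain ⟨hmul, hcubic⟩ := stmt_5_general G hconn k d hreg hd hdiam.2 hndb
  refine ⟨?_, ?_, ?_⟩ <;> rintro rfl <;> omega
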